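/- Let p be a prime with p \equiv 1 (mod 4), and write p = a^2 + b^2 with a \equiv 1 (mod 4). Then \sum_{k=0}^{(p-1)/4} \binom{4k}{2k}^2 / 16^{2k} \equiv 1/2 + (-1)^{(p-1)/4} a - (-1)^{(p-1)/4} p/(4a) \pmod{p^2}. -/

import Mathlib

open Finset Polynomial

/-- `a ≡ b (mod p^k)` as rationals: `a - b` is `p^k` times a `p`-integral rational. -/
def ratCongr (p k : ℕ) (a b : ℚ) : Prop :=
  ∃ c : ℚ, a - b = (p : ℚ) ^ k * c ∧ ¬ (p ∣ c.den)

/-- The Legendre polynomial `P n`, defined via Rodrigues' formula. -/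
noncomputable def legendre (n : ℕ) : Polynomial ℚ :=
  ((2 ^ n * n.factorial : ℚ)⁻¹) • ((fun q => Polynomial.derivative q)^[n] ((X ^ 2 - 1) ^ n))

/-- The Legendre symbol of a `p`-integral rational `x` modulo `p`
(for `x = m/n` it is `(mn/p)`, the symbol of the residue of `x` mod `p`). -/
def ratLegendreSym (p : ℕ) [Fact p.Prime] (x : ℚ) : ℤ :=
  legendreSym p (x.num * x.den)


lemma aux_series_D (n : ℕ) (m : ℕ) (hn : n = 2 * m) :
    ((∑ k ∈ range (n + 1), n.choose k * (n + k).choose k : ℕ) : ℤ) =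
      ∑ i ∈ range (m + 1), (-1 : ℤ) ^ i * (n.choose i : ℤ) *
        ((2 * n + 2 * (m - i)).choose (2 * n) : ℤ) := by
  have key : (PowerSeries.mk fun k => ((n + k).choose n : ℤ)) * (1 + PowerSeries.X) ^ n
      = (PowerSeries.mk fun k => ((2 * n + k).choose (2 * n) : ℤ)) *
        (1 - PowerSeries.X ^ 2) ^ n := by
    have h1 := PowerSeries.mk_add_choose_mul_one_sub_pow_eq_one ℤ n
    have h2 := PowerSeries.mk_add_choose_mul_one_sub_pow_eq_one ℤ (2 * n)
    set A := (PowerSeries.mk fun k => ((n + k).choose n : ℤ))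
    set B := (PowerSeries.mk fun k => ((2 * n + k).choose (2 * n) : ℤ))
    have e1 : (1 - PowerSeries.X ^ 2 : PowerSeries ℤ) ^ n =
        (1 - PowerSeries.X) ^ n * (1 + PowerSeries.X) ^ n := by
      rw [← mul_pow]; congr 1; ring
    have e2 : (1 - PowerSeries.X : PowerSeries ℤ) ^ (2 * n + 1) =
        (1 - PowerSeries.X) ^ n * (1 - PowerSeries.X) ^ (n + 1) := by ring
    rw [e2] at h2
    rw [e1]
    linear_combination (-A * (1 + PowerSeries.X) ^ n) * h2
      + (B * (1 - PowerSeries.X) ^ n * (1 + PowerSeries.X) ^ n) * h1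
  have c := congrArg (PowerSeries.coeff n) key
  rw [PowerSeries.coeff_mul, Finset.Nat.sum_antidiagonal_eq_sum_range_succ
    (fun i j => PowerSeries.coeff i (PowerSeries.mk fun k => ((n + k).choose n : ℤ)) *
      PowerSeries.coeff j ((1 + PowerSeries.X : PowerSeries ℤ) ^ n))] at c
  have hL : ((∑ k ∈ range (n + 1), n.choose k * (n + k).choose k : ℕ) : ℤ) =
      ∑ k ∈ range n.succ, PowerSeries.coeff k (PowerSeries.mk fun k => ((n + k).choose n : ℤ)) *
      PowerSeries.coeff (n - k) ((1 + PowerSeries.X : PowerSeries ℤ) ^ n) := by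
    push_cast
    refine Finset.sum_congr rfl fun k hk => ?_
    have hk' : k ≤ n := by simp at hk; omega
    have : ((1 + PowerSeries.X : PowerSeries ℤ) ^ n) = (((1 + X : ℤ[X]) ^ n : ℤ[X]) : PowerSeries ℤ) := by
      simp
    rw [this, Polynomial.coeff_coe, Polynomial.coeff_one_add_X_pow, PowerSeries.coeff_mk,
      Nat.choose_symm hk', Nat.choose_symm_add]
    ring
  rw [hL, c]
  have e3 : (1 - PowerSeries.X ^ 2 : PowerSeries ℤ) ^ n =
      ∑ i ∈ range (n + 1), PowerSeries.C ((-1 : ℤ) ^ i * (n.choose i : ℤ)) * PowerSeries.X ^ (2 * i) := by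
    rw [sub_eq_neg_add, add_pow]
    refine Finset.sum_congr rfl fun i _ => ?_
    simp only [one_pow, mul_one, map_mul, map_pow, map_neg, map_one, map_natCast]
    rw [neg_pow, pow_mul]; ring
  rw [e3, Finset.mul_sum, map_sum]
  have : range (m + 1) ⊆ range (n + 1) := by
    intro x; simp; omega
  rw [← Finset.sum_subset this]
  · refine Finset.sum_congr rfl fun i hi => ?_
    have hi' : i ≤ m := by simp at hi; omega
    rw [mul_left_comm, PowerSeries.coeff_C_mul, PowerSeries.coeff_mul_X_pow', if_pos (by omega),
      PowerSeries.coeff_mk]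
    congr 4
    omega
  · intro i _ hi
    have hi' : m < i := by simp at hi; omega
    rw [mul_left_comm, PowerSeries.coeff_C_mul, PowerSeries.coeff_mul_X_pow', if_neg (by omega)]
    simp

lemma aux_series_one (n : ℕ) :
    (∑ k ∈ range (n + 1), (-1 : ℤ) ^ (n - k) * ((n.choose k : ℤ) * ((n + k).choose k : ℤ))) = 1 := by
  have h1 := PowerSeries.mk_add_choose_mul_one_sub_pow_eq_one ℤ n
  have h0 := PowerSeries.mk_one_mul_one_sub_eq_one ℤ
  set A := (PowerSeries.mk fun k => ((n + k).choose n : ℤ)) with hA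
  have key : A * (1 - PowerSeries.X) ^ n = PowerSeries.mk 1 := by
    rw [pow_succ] at h1
    linear_combination (PowerSeries.mk 1) * h1 - (A * (1 - PowerSeries.X) ^ n) * h0
  have c := congrArg (PowerSeries.coeff n) key
  rw [PowerSeries.coeff_mul, Finset.Nat.sum_antidiagonal_eq_sum_range_succ
    (fun i j => PowerSeries.coeff i A *
      PowerSeries.coeff j ((1 - PowerSeries.X : PowerSeries ℤ) ^ n))] at c
  rw [PowerSeries.coeff_mk] at c
  simp only [Pi.one_apply] at c
  refine Eq.trans (Finset.sum_congr rfl fun k hk => ?_) c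
  have hk' : k ≤ n := by simp at hk; omega
  have : ((1 - PowerSeries.X : PowerSeries ℤ) ^ n) =
      ∑ i ∈ range (n + 1), PowerSeries.C ((-1 : ℤ) ^ i * (n.choose i : ℤ)) * PowerSeries.X ^ i := by
    rw [sub_eq_neg_add, add_pow]
    refine Finset.sum_congr rfl fun i _ => ?_
    simp only [one_pow, mul_one, map_mul, map_pow, map_neg, map_one, map_natCast]
    rw [neg_pow]; ring
  have hc : PowerSeries.coeff (n - k) ((1 - PowerSeries.X : PowerSeries ℤ) ^ n) =
      (-1) ^ (n - k) * (n.choose k : ℤ) := by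
    rw [this, map_sum]
    simp only [PowerSeries.coeff_C_mul, PowerSeries.coeff_X_pow]
    rw [Finset.sum_eq_single (n - k)]
    · simp [Nat.choose_symm hk']
    · intro b _ hb; simp [Ne.symm hb]
    · intro h; simp at h
  rw [hc, hA, PowerSeries.coeff_mk, Nat.choose_symm_add]
  ring

section modsq
variable {p : ℕ}

lemma aux_unit (hp : p.Prime) {k : ℕ} (h0 : 0 < k) (h1 : k < p) :
    (k : ZMod (p ^ 2)) * (k : ZMod (p ^ 2))⁻¹ = 1 := by
  apply ZMod.coe_mul_inv_eq_one
  apply Nat.Coprime.pow_right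
  exact ((Nat.Prime.coprime_iff_not_dvd hp).2 (Nat.not_dvd_of_pos_of_lt h0 h1)).symm

lemma aux_psq : (p : ZMod (p ^ 2)) * p = 0 := by
  have := ZMod.natCast_self (p ^ 2)
  push_cast at this
  rw [← this]; ring

lemma aux_choose_add (hp : p.Prime) (j : ℕ) (hj : j < p) :
    (p : ZMod (p ^ 2)) * ((p + j).choose j : ZMod (p ^ 2)) = p := by
  induction j with
  | zero => simp
  | succ j ih =>
    have ih := ih (by omega)
    have h := aux_unit hp (k := j + 1) (by omega) hj
    have e := Nat.add_one_mul_choose_eq (p + j) j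
    have e' := congrArg (Nat.cast : ℕ → ZMod (p ^ 2)) e
    push_cast at e' h
    have hps := aux_psq (p := p)
    rw [show p + (j + 1) = p + j + 1 by ring]
    set x := ((p + j).choose j : ZMod (p ^ 2))
    set y := ((p + j + 1).choose (j + 1) : ZMod (p ^ 2))
    set v := ((j : ZMod (p ^ 2)) + 1)⁻¹
    linear_combination (-(p : ZMod (p^2)) * y + p) * h - (p * v) * e' + (v * (j + 1)) * ih + v * x * hps

lemma aux_choose_p (hp : p.Prime) (k : ℕ) (hk : 0 < k) (hk' : k < p) :
    (((p - 1 + k).choose (p - 1) : ℕ) : ZMod (p ^ 2)) = p * (k : ZMod (p ^ 2))⁻¹ := by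
  obtain ⟨j, rfl⟩ : ∃ j, k = j + 1 := ⟨k - 1, by omega⟩
  have h := aux_unit hp hk hk'
  have h2 := aux_choose_add hp j (by omega)
  have e1 : (p - 1 + (j + 1)).choose (p - 1) = (p + j).choose (j + 1) := by
    rw [Nat.choose_symm_add]; congr 1; have := hp.pos; omega
  have e2 := Nat.choose_succ_right_eq (p + j) j
  rw [show p + j - j = p by omega] at e2
  have e2' := congrArg (Nat.cast : ℕ → ZMod (p ^ 2)) e2
  rw [e1]
  push_cast at e2' h ⊢
  set v := ((j : ZMod (p ^ 2)) + 1)⁻¹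
  linear_combination (-((p + j).choose (j+1) : ZMod (p ^ 2))) * h + v * e2' + v * h2

lemma aux_choose_pred (hp : p.Prime) (k : ℕ) (hk' : k < p) :
    (p : ZMod (p ^ 2)) * ((p - 1).choose k : ZMod (p ^ 2)) = p * (-1) ^ k := by
  induction k with
  | zero => simp
  | succ k ih =>
    have ih := ih (by omega)
    have e := Nat.choose_succ_succ (p - 1) k
    rw [show (p - 1).succ = p by have := hp.pos; omega] at e
    obtain ⟨c, hc⟩ := hp.dvd_choose_self (k := k + 1) (by omega) hk'
    have e' := congrArg (Nat.cast : ℕ → ZMod (p ^ 2)) e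
    have hc' := congrArg (Nat.cast : ℕ → ZMod (p ^ 2)) hc
    simp only [Nat.succ_eq_add_one] at e'
    push_cast at e' hc'
    have hps := aux_psq (p := p)
    linear_combination (-(p : ZMod (p^2))) * e' + p * hc' + c * hps - ih

lemma aux_choose_self (hp : p.Prime) (k : ℕ) (hk : 0 < k) (hk' : k < p) :
    (-1) ^ k * (p.choose k : ZMod (p ^ 2)) = - (p * (k : ZMod (p ^ 2))⁻¹) := by
  obtain ⟨j, rfl⟩ : ∃ j, k = j + 1 := ⟨k - 1, by omega⟩
  have h := aux_unit hp hk hk'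
  have h2 := aux_choose_pred hp j (by omega)
  have e := Nat.add_one_mul_choose_eq (p - 1) j
  rw [show p - 1 + 1 = p by have := hp.pos; omega] at e
  have e' := congrArg (Nat.cast : ℕ → ZMod (p ^ 2)) e
  push_cast at e' h ⊢
  set v := ((j : ZMod (p ^ 2)) + 1)⁻¹
  have s : ((-1 : ZMod (p^2)) ^ j) * (-1) ^ j = 1 := by rw [← mul_pow]; simp
  rw [pow_succ (-1 : ZMod (p ^ 2))]
  linear_combination ((-1)^j * (p.choose (j+1) : ZMod (p ^ 2))) * h + v * (-1)^j * e' - v * (-1)^j * h2 - p * v * s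


lemma aux_one_sub_pow (hp : p.Prime) (hodd : Odd p) (w : ZMod (p ^ 2)) (hw : w ^ p = w) :
    (1 - w) ^ p = 1 - w - p * ∑ k ∈ Ico 1 p, (k : ZMod (p ^ 2))⁻¹ * w ^ k := by
  have e : (1 - w) ^ p = (-w + 1) ^ p := by congr 1; ring
  rw [e, add_pow, Finset.sum_range_succ, Finset.range_eq_Ico,
    Finset.sum_eq_sum_Ico_succ_bot hp.pos]
  have h : ∑ k ∈ Ico (0 + 1) p, (-w) ^ k * 1 ^ (p - k) * (p.choose k : ZMod (p ^ 2)) =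
      - (p * ∑ k ∈ Ico 1 p, (k : ZMod (p ^ 2))⁻¹ * w ^ k) := by
    rw [Finset.mul_sum, ← Finset.sum_neg_distrib]
    refine Finset.sum_congr rfl fun k hk => ?_
    simp at hk
    have := aux_choose_self hp k (by omega) hk.2
    rw [one_pow, neg_pow]
    linear_combination w ^ k * this
  rw [h, hodd.neg_pow, hw]
  simp
  ring

lemma aux_central (hp : p.Prime) (n : ℕ) (hn : p = 2 * n + 1) (j : ℕ) (hj : j ≤ n) :
    (16 : ZMod (p ^ 2)) ^ j * ((n.choose j : ZMod (p ^ 2)) * ((n + j).choose j : ZMod (p ^ 2))) =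
      (-1) ^ j * ((2 * j).choose j : ZMod (p ^ 2)) ^ 2 := by
  induction j with
  | zero => simp
  | succ j ih =>
    have ih := ih (by omega)
    have h := aux_unit hp (k := j + 1) (by omega) (by omega)
    have e1 := congrArg (Nat.cast : ℕ → ZMod (p ^ 2)) (Nat.choose_succ_right_eq n j)
    have e2 := congrArg (Nat.cast : ℕ → ZMod (p ^ 2)) (Nat.add_one_mul_choose_eq (n + j) j)
    have e3 := congrArg (Nat.cast : ℕ → ZMod (p ^ 2)) (Nat.succ_mul_centralBinom_succ j)
    simp only [Nat.centralBinom_eq_two_mul_choose] at e3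
    have hps := aux_psq (p := p)
    have hp' : (p : ZMod (p^2)) = 2 * n + 1 := by exact_mod_cast congrArg (Nat.cast : ℕ → ZMod (p ^ 2)) hn
    rw [hp'] at hps
    push_cast [show j ≤ n by omega] at e1 e2 e3 h
    rw [show n + (j + 1) = n + j + 1 by ring]
    set v := ((j : ZMod (p ^ 2)) + 1)⁻¹
    set A := (n.choose j : ZMod (p ^ 2))
    set A' := (n.choose (j+1) : ZMod (p ^ 2))
    set B := ((n + j).choose j : ZMod (p ^ 2))
    set B' := ((n + j + 1).choose (j+1) : ZMod (p ^ 2))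
    set C := ((2 * j).choose j : ZMod (p ^ 2))
    set C' := ((2 * (j + 1)).choose (j+1) : ZMod (p ^ 2))
    have main : ((j:ZMod (p^2)) + 1)^2 * (16 ^ (j+1) * (A' * B')) = (j+1)^2 * ((-1)^(j+1) * C'^2) := by
      have t1 : ((j:ZMod (p^2)) + 1)^2 * (16 ^ (j+1) * (A' * B')) =
          16 * (16^j * (A * B)) * ((n - j) * (n + j + 1)) := by
        rw [pow_succ (16 : ZMod (p^2))]
        linear_combination (16^j*16*B' * (j+1)) * e1 - 16^j*16*(A*(n-j)) * e2
      have t2 : ((j:ZMod (p^2))+1)^2 * ((-1)^(j+1) * C'^2) = -4 * ((-1)^j * C^2) * (2*j+1)^2 := by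
        rw [pow_succ (-1 : ZMod (p ^ 2))]
        linear_combination (-(-1)^j * ((j+1)*C' + 2*(2*j+1)*C)) * e3
      rw [t1, t2, ← ih]
      linear_combination 4 * (16^j * (A*B)) * hps
    linear_combination v^2 * main - (16 ^ (j+1) * (A' * B') - (-1)^(j+1) * C'^2) * ((j+1)*v + 1) * h

end modsq

section teich
variable {p : ℕ}

/-- Teichmüller representative modulo `p^2`. -/
def teich (p : ℕ) (x : ZMod p) : ZMod (p ^ 2) := (x.val : ZMod (p ^ 2)) ^ p

lemma teich_nat (hp : p.Prime) (y : ℕ) : (y : ZMod (p ^ 2)) ^ p = teich p (y : ZMod p) := by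
  have := Fact.mk hp
  unfold teich
  have h : ((p : ℤ)) ∣ (y : ℤ) - ((y : ZMod p).val : ℤ) := by
    rw [← ZMod.intCast_zmod_eq_zero_iff_dvd]
    push_cast
    simp
  have h2 : (p : ZMod (p ^ 2)) ∣ (y : ZMod (p ^ 2)) - ((y : ZMod p).val : ZMod (p ^ 2)) := by
    obtain ⟨c, hc⟩ := h
    refine ⟨c, ?_⟩
    have := congrArg (Int.cast : ℤ → ZMod (p ^ 2)) hc
    push_cast at this
    exact this
  have h3 := dvd_sub_pow_of_dvd_sub h2 1
  have h4 : (p : ZMod (p ^ 2)) ^ (1 + 1) = 0 := by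
    rw [← aux_psq (p := p)]; ring
  rw [h4, zero_dvd_iff, pow_one] at h3
  exact sub_eq_zero.mp h3

/-- reduction -/
def red (p : ℕ) : ZMod (p ^ 2) →+* ZMod p := ZMod.castHom (dvd_pow_self p two_ne_zero) (ZMod p)

lemma teich_of_red (hp : p.Prime) (y : ZMod (p ^ 2)) : y ^ p = teich p (red p y) := by
  have : NeZero (p ^ 2) := ⟨pow_ne_zero _ hp.ne_zero⟩
  obtain ⟨k, rfl⟩ := ZMod.natCast_zmod_surjective y
  rw [teich_nat hp, map_natCast]

lemma red_teich (hp : p.Prime) (x : ZMod p) : red p (teich p x) = x := by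
  have := Fact.mk hp
  unfold teich
  rw [map_pow, map_natCast, ZMod.natCast_zmod_val, ZMod.pow_card]

lemma teich_mul (hp : p.Prime) (x y : ZMod p) : teich p (x * y) = teich p x * teich p y := by
  have h : ∀ z, teich p z ^ p = teich p z := fun z => by rw [teich_of_red hp, red_teich hp]
  rw [← h x, ← h y, ← mul_pow, teich_of_red hp, map_mul, red_teich hp, red_teich hp]

lemma teich_pow_p (hp : p.Prime) (x : ZMod p) : teich p x ^ p = teich p x := by
  rw [teich_of_red hp, red_teich hp]

lemma teich_zero (hp : p.Prime) : teich p 0 = 0 := by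
  unfold teich; simp [hp.ne_zero]

lemma teich_one (hp : p.Prime) : teich p 1 = 1 := by
  have := teich_nat hp 1
  simpa using this.symm

lemma teich_neg_one (hp : p.Prime) (ho : Odd p) : teich p (-1) = -1 := by
  have := teich_of_red hp (-1)
  rw [map_neg, map_one] at this
  rw [← this, ho.neg_one_pow]

lemma teich_pow (hp : p.Prime) (x : ZMod p) (k : ℕ) : teich p (x ^ k) = teich p x ^ k := by
  induction k with
  | zero => simp [teich_one hp]
  | succ k ih => rw [pow_succ x, teich_mul hp, ih, pow_succ (teich p x)]

lemma teich_one_sub (hp : p.Prime) (x : ZMod p) : teich p (1 - x) = (1 - teich p x) ^ p := by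
  rw [teich_of_red hp (1 - teich p x), map_sub, map_one, red_teich hp]

lemma isUnit_of_red (hp : p.Prime) (y : ZMod (p ^ 2)) (h : red p y ≠ 0) : IsUnit y := by
  have : NeZero (p ^ 2) := ⟨pow_ne_zero _ hp.ne_zero⟩
  obtain ⟨k, rfl⟩ := ZMod.natCast_zmod_surjective y
  rw [map_natCast] at h
  rw [ZMod.isUnit_iff_coprime]
  apply Nat.Coprime.pow_right
  refine ((Nat.Prime.coprime_iff_not_dvd hp).2 ?_).symm
  rwa [← ZMod.natCast_eq_zero_iff]

lemma teich_sum [Fact p.Prime] (hp : p.Prime) (N : ℕ) (hN : 0 < N) :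
    ∑ x : ZMod p, teich p x ^ N = if (p - 1) ∣ N then (p : ZMod (p ^ 2)) - 1 else 0 := by
  split_ifs with h
  · obtain ⟨c, rfl⟩ := h
    have : ∀ x : ZMod p, teich p x ^ ((p - 1) * c) = if x = 0 then 0 else 1 := by
      intro x
      split_ifs with hx
      · rw [hx, teich_zero hp, zero_pow hN.ne']
      · rw [pow_mul, ← teich_pow hp, ZMod.pow_card_sub_one_eq_one hx, teich_one hp, one_pow]
    simp only [this]
    rw [Finset.sum_ite]
    simp [Finset.filter_ne', Finset.card_erase_of_mem, ZMod.card, Nat.cast_sub hp.one_le]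
  · obtain ⟨g, hg⟩ := IsCyclic.exists_generator (α := (ZMod p)ˣ)
    have hord : orderOf g = p - 1 := by
      rw [orderOf_eq_card_of_forall_mem_zpowers hg, Nat.card_eq_fintype_card, ZMod.card_units]
    have h1 : IsUnit (teich p (g : ZMod p) ^ N - 1) := by
      apply isUnit_of_red hp
      rw [map_sub, map_pow, red_teich hp, map_one]
      intro h0
      apply h
      rw [← hord]
      apply orderOf_dvd_of_pow_eq_one
      ext
      push_cast
      exact sub_eq_zero.mp h0
    have h2 : ∑ x : ZMod p, teich p x ^ N = teich p (g : ZMod p) ^ N * ∑ x : ZMod p, teich p x ^ N := by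
      conv_lhs => rw [← g.mulLeft_bijective.sum_comp]
      rw [Finset.mul_sum]
      refine Finset.sum_congr rfl fun x _ => ?_
      rw [teich_mul hp, mul_pow]
    have h3 : (teich p (g : ZMod p) ^ N - 1) * ∑ x : ZMod p, teich p x ^ N = 0 := by
      linear_combination -h2
    exact h1.mul_right_eq_zero.mp h3

lemma aux_nil (u v : ZMod (p ^ 2)) (k : ℕ) :
    (u - (p : ZMod (p ^ 2)) * v) ^ (k + 1) = u ^ (k + 1) - ((k : ZMod (p ^ 2)) + 1) * (p : ZMod (p ^ 2)) * v * u ^ k := by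
  have hps := aux_psq (p := p)
  induction k with
  | zero => simp
  | succ k ih =>
    rw [pow_succ (u - (p : ZMod (p ^ 2)) * v), ih]
    push_cast
    linear_combination ((k + 1) * v ^ 2 * u ^ k) * hps

lemma teich_sum_one_sub [Fact p.Prime] (hp : p.Prime) (N K : ℕ) (hN : 0 < N) :
    ∑ x : ZMod p, teich p x ^ N * (1 - teich p x) ^ K =
      ∑ i ∈ range (K + 1), (-1) ^ i * (K.choose i : ZMod (p ^ 2)) *
        (if (p - 1) ∣ (N + i) then (p : ZMod (p ^ 2)) - 1 else 0) := by
  have : ∀ x : ZMod p, teich p x ^ N * (1 - teich p x) ^ K =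
      ∑ i ∈ range (K + 1), (-1) ^ i * (K.choose i : ZMod (p ^ 2)) * teich p x ^ (N + i) := by
    intro x
    rw [show (1 - teich p x) ^ K = (-teich p x + 1) ^ K by congr 1; ring, add_pow, Finset.mul_sum]
    refine Finset.sum_congr rfl fun i _ => ?_
    rw [one_pow, neg_pow, pow_add (teich p x)]; ring
  simp only [this]
  rw [Finset.sum_comm]
  refine Finset.sum_congr rfl fun i _ => ?_
  rw [← Finset.mul_sum, teich_sum hp _ (by omega)]

lemma aux_ind (m N K : ℕ) (t : ℕ) (R : Type*) [CommRing R] (f : ℕ → R) (c : R)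
    (h : ∀ i ∈ range (K + 1), 4 * m ∣ N + i ↔ i = t) :
    ∑ i ∈ range (K + 1), f i * (if 4 * m ∣ N + i then c else 0) =
      if t < K + 1 then f t * c else 0 := by
  have : ∀ i ∈ range (K + 1), f i * (if 4 * m ∣ N + i then c else 0) = if t = i then f i * c else 0 := by
    intro i hi
    by_cases hh : i = t
    · rw [if_pos ((h i hi).2 hh), if_pos hh.symm]
    · rw [if_neg (fun q => hh ((h i hi).1 q)), if_neg (fun q => hh q.symm), mul_zero]
  rw [Finset.sum_congr rfl this, Finset.sum_ite_eq]
  simp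

lemma dvd_aux (m i s : ℕ) (hm : 0 < m) (c : ℕ) (h1 : i + s < 4 * m * (c + 1)) (h2 : 4 * m * c < i + s + 4 * m) :
   4 * m ∣ i + s ↔ i + s = 4 * m * c := by
  constructor
  · rintro ⟨d, hd⟩
    rw [hd] at h1 h2 ⊢
    have : d < c + 1 := lt_of_mul_lt_mul_left h1 (Nat.zero_le _)
    have : c < d + 1 := lt_of_mul_lt_mul_left (a := 4 * m) (by linarith) (Nat.zero_le _)
    congr 1
    omega
  · intro h; rw [h]; exact dvd_mul_right _ _

lemma aux_F [Fact p.Prime] (hp : p.Prime) (m : ℕ) (hm : 0 < m) (hpm : p = 4 * m + 1) :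
    ∑ x : ZMod p, teich p x ^ (3 * m) * (teich p (1 - x)) ^ (2 * m) =
      (p - 1) * (-1) ^ m * ((2 * m).choose m : ZMod (p ^ 2)) -
      ∑ s ∈ range m, p * ((s + 1 : ℕ) : ZMod (p ^ 2))⁻¹ *
        ((-1) ^ (m + s + 1) * ((2 * m - 1).choose (m - 1 - s) : ZMod (p ^ 2))) := by
  have hps := aux_psq (p := p)
  have hodd : Odd p := ⟨2 * m, by omega⟩
  have hp1 : p - 1 = 4 * m := by omega
  have hpc : (p : ZMod (p ^ 2)) = 4 * m + 1 := by
    exact_mod_cast congrArg (Nat.cast : ℕ → ZMod (p ^ 2)) hpm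
  have e1 : ∀ x : ZMod p, teich p x ^ (3 * m) * (teich p (1 - x)) ^ (2 * m) =
      teich p x ^ (3 * m) * (1 - teich p x) ^ (2 * m) -
      ∑ k ∈ range (4 * m), (2 * m * p) * ((k + 1 : ℕ) : ZMod (p ^ 2))⁻¹ *
        (teich p x ^ (3 * m + k + 1) * (1 - teich p x) ^ (2 * m - 1)) := by
    intro x
    rw [teich_one_sub hp, aux_one_sub_pow hp hodd _ (teich_pow_p hp x), Finset.sum_Ico_eq_sum_range,
      hp1]
    obtain ⟨l, hl⟩ : ∃ l, 2 * m = l + 1 := ⟨2 * m - 1, by omega⟩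
    have hlc : (2 : ZMod (p ^ 2)) * m = l + 1 := by exact_mod_cast congrArg (Nat.cast : ℕ → ZMod (p ^ 2)) hl
    rw [hl, aux_nil, hlc, mul_sub]
    congr 1
    rw [Finset.mul_sum, Finset.sum_mul, Finset.mul_sum]
    refine Finset.sum_congr rfl fun k _ => ?_
    rw [Nat.add_sub_cancel, add_comm 1 k, add_assoc (3 * m), pow_add (teich p x) (3 * m)]
    ring
  simp only [e1]
  rw [Finset.sum_sub_distrib, Finset.sum_comm]
  congr 1
  · rw [teich_sum_one_sub hp _ _ (by omega), hp1, aux_ind m (3 * m) (2 * m) m, if_pos (by omega)]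
    · ring
    · intro i hi
      simp at hi
      rw [dvd_aux m (3 * m) i hm 1 (by omega) (by omega)]
      omega
  · simp only [← Finset.mul_sum]
    have e2 : ∀ k, ∑ x : ZMod p, (teich p x ^ (3 * m + k + 1) * (1 - teich p x) ^ (2 * m - 1)) =
        ∑ i ∈ range (2 * m - 1 + 1), (-1) ^ i * ((2 * m - 1).choose i : ZMod (p ^ 2)) *
        (if 4 * m ∣ (3 * m + k + 1 + i) then (p : ZMod (p ^ 2)) - 1 else 0) := by
      intro k
      rw [teich_sum_one_sub hp _ _ (by omega), hp1]
    simp only [e2]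
    rw [show range (4 * m) = range (m + 2 * m + m) by congr 1; omega,
      Finset.sum_range_add, Finset.sum_range_add]
    have z1 : ∀ k ∈ range m, 2 * (m : ZMod (p ^ 2)) * p * ((k + 1 : ℕ) : ZMod (p ^ 2))⁻¹ *
        ∑ i ∈ range (2 * m - 1 + 1), (-1) ^ i * ((2 * m - 1).choose i : ZMod (p ^ 2)) *
        (if 4 * m ∣ (3 * m + k + 1 + i) then (p : ZMod (p ^ 2)) - 1 else 0) =
        -2 * (m : ZMod (p ^ 2)) * (p * ((k + 1 : ℕ) : ZMod (p ^ 2))⁻¹ *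
          ((-1) ^ (m + k + 1) * ((2 * m - 1).choose (m - 1 - k) : ZMod (p ^ 2)))) := by
      intro k hk
      simp at hk
      rw [aux_ind m (3 * m + k + 1) (2 * m - 1) (m - 1 - k), if_pos (by omega)]
      · have : ((-1 : ZMod (p ^ 2))) ^ (m + k + 1) = (-1) ^ (m - 1 - k) := by
          rw [show m + k + 1 = (m - 1 - k) + 2 * (k + 1) by omega, pow_add (-1 : ZMod (p ^ 2)),
            pow_mul (-1 : ZMod (p ^ 2))]; simp
        rw [this]
        linear_combination (2 * m * ((k + 1 : ℕ) : ZMod (p ^ 2))⁻¹ * (-1) ^ (m - 1 - k) * ((2 * m - 1).choose (m - 1 - k) : ZMod (p ^ 2))) * hps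
      · intro i hi
        simp at hi
        rw [dvd_aux m (3 * m + k + 1) i hm 1 (by omega) (by omega)]
        omega
    have z2 : ∀ k ∈ range (2 * m), 2 * (m : ZMod (p ^ 2)) * p * ((m + k + 1 : ℕ) : ZMod (p ^ 2))⁻¹ *
        ∑ i ∈ range (2 * m - 1 + 1), (-1) ^ i * ((2 * m - 1).choose i : ZMod (p ^ 2)) *
        (if 4 * m ∣ (3 * m + (m + k) + 1 + i) then (p : ZMod (p ^ 2)) - 1 else 0) = 0 := by
      intro k hk
      simp at hk
      rw [Finset.sum_eq_zero, mul_zero]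
      intro i hi
      simp at hi
      rw [if_neg, mul_zero]
      intro h
      have h' : 4 * m ∣ k + 1 + i := by
        have : 4 * m ∣ 4 * m + (k + 1 + i) := by convert h using 1; ring
        exact (Nat.dvd_add_right (dvd_refl _)).1 this
      have := Nat.le_of_dvd (by omega) h'
      omega
    have z3 : ∀ k ∈ range m, 2 * (m : ZMod (p ^ 2)) * p * ((m + 2 * m + (m - 1 - k) + 1 : ℕ) : ZMod (p ^ 2))⁻¹ *
        ∑ i ∈ range (2 * m - 1 + 1), (-1) ^ i * ((2 * m - 1).choose i : ZMod (p ^ 2)) *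
        (if 4 * m ∣ (3 * m + (m + 2 * m + (m - 1 - k)) + 1 + i) then (p : ZMod (p ^ 2)) - 1 else 0) =
        -2 * (m : ZMod (p ^ 2)) * (p * ((k + 1 : ℕ) : ZMod (p ^ 2))⁻¹ *
          ((-1) ^ (m + k + 1) * ((2 * m - 1).choose (m - 1 - k) : ZMod (p ^ 2)))) := by
      intro k hk
      simp at hk
      rw [aux_ind m _ (2 * m - 1) (m + k), if_pos (by omega)]
      · have hch : (2 * m - 1).choose (m + k) = (2 * m - 1).choose (m - 1 - k) := by
          rw [← Nat.choose_symm (by omega)]; congr 1; omega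
        rw [hch]
        have u1 := aux_unit hp (k := k + 1) (by omega) (by omega)
        have u2 := aux_unit hp (k := m + 2 * m + (m - 1 - k) + 1) (by omega) (by omega)
        have hs : ((m + 2 * m + (m - 1 - k) + 1 : ℕ) : ZMod (p ^ 2)) + ((k + 1 : ℕ) : ZMod (p ^ 2)) = p := by
          rw [← Nat.cast_add]; congr 1; omega
        have hinv : (p : ZMod (p ^ 2)) * ((m + 2 * m + (m - 1 - k) + 1 : ℕ) : ZMod (p ^ 2))⁻¹ =
            - (p * ((k + 1 : ℕ) : ZMod (p ^ 2))⁻¹) := by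
          generalize ((m + 2 * m + (m - 1 - k) + 1 : ℕ) : ZMod (p ^ 2)) = A at *
          generalize ((k + 1 : ℕ) : ZMod (p ^ 2)) = B at *
          generalize A⁻¹ = A' at *
          generalize B⁻¹ = B' at *
          linear_combination (-p * A') * u1 - p * B' * u2 + p * A' * B' * hs + A' * B' * hps
        have hneg : ((-1 : ZMod (p ^ 2))) ^ (m + k + 1) = - (-1) ^ (m + k) := by
          rw [pow_succ (-1 : ZMod (p ^ 2))]; ring
        rw [hneg]
        generalize ((m + 2 * m + (m - 1 - k) + 1 : ℕ) : ZMod (p ^ 2))⁻¹ = A' at *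
        generalize ((k + 1 : ℕ) : ZMod (p ^ 2))⁻¹ = B' at *
        generalize (-1 : ZMod (p ^ 2)) ^ (m + k) = S at *
        generalize ((2 * m - 1).choose (m - 1 - k) : ZMod (p ^ 2)) = C at *
        linear_combination (2 * m * S * C * (p - 1)) * hinv - (2 * m * B' * S * C) * hps
      · intro i hi
        simp at hi
        rw [dvd_aux m _ i hm 2 (by omega) (by omega)]
        omega
    have z3' : ∑ k ∈ range m, 2 * (m : ZMod (p ^ 2)) * p * ((m + 2 * m + k + 1 : ℕ) : ZMod (p ^ 2))⁻¹ *
        ∑ i ∈ range (2 * m - 1 + 1), (-1) ^ i * ((2 * m - 1).choose i : ZMod (p ^ 2)) *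
        (if 4 * m ∣ (3 * m + (m + 2 * m + k) + 1 + i) then (p : ZMod (p ^ 2)) - 1 else 0) =
        ∑ k ∈ range m, -2 * (m : ZMod (p ^ 2)) * (p * ((k + 1 : ℕ) : ZMod (p ^ 2))⁻¹ *
          ((-1) ^ (m + k + 1) * ((2 * m - 1).choose (m - 1 - k) : ZMod (p ^ 2)))) := by
      rw [← Finset.sum_range_reflect]
      exact Finset.sum_congr rfl z3
    rw [Finset.sum_congr rfl z1, Finset.sum_congr rfl z2, z3', Finset.sum_const_zero, add_zero,
      ← Finset.sum_add_distrib]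
    refine Finset.sum_congr rfl fun s _ => ?_
    generalize ((s + 1 : ℕ) : ZMod (p ^ 2))⁻¹ = B' at *
    generalize (-1 : ZMod (p ^ 2)) ^ (m + s + 1) = S at *
    generalize ((2 * m - 1).choose (m - 1 - s) : ZMod (p ^ 2)) = C at *
    linear_combination (p * B' * S * C) * hpc - (B' * S * C) * hps

lemma aux_alt (N k : ℕ) : ∑ i ∈ range (k + 1), (-1 : ℤ) ^ i * ((N + 1).choose i : ℤ) =
    (-1) ^ k * (N.choose k : ℤ) := by
  induction k with
  | zero => simp
  | succ k ih =>
    rw [Finset.sum_range_succ, ih, Nat.choose_succ_succ]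
    push_cast
    ring

lemma aux_half (m : ℕ) (hm : 0 < m) :
    2 * ∑ s ∈ range m, (-1 : ℤ) ^ (m + s + 1) * ((2 * m).choose (m - 1 - s) : ℤ) =
      - ((-1) ^ m * ((2 * m).choose m : ℤ)) := by
  obtain ⟨l, rfl⟩ : ∃ l, m = l + 1 := ⟨m - 1, by omega⟩
  have h := aux_alt (2 * l + 1) l
  rw [← Finset.sum_range_reflect] at h
  have e : ∑ s ∈ range (l + 1), (-1 : ℤ) ^ (l + 1 + s + 1) * ((2 * (l + 1)).choose (l + 1 - 1 - s) : ℤ)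
     = (-1) ^ l * ((2 * l + 1).choose l : ℤ) := by
    rw [← h]
    refine Finset.sum_congr rfl fun s hs => ?_
    simp at hs
    rw [show l + 1 + s + 1 = (l + 1 - 1 - s) + 2 * (s + 1) by omega, pow_add, pow_mul]
    simp [show 2 * (l + 1) = 2 * l + 1 + 1 by ring]
  rw [e]
  have h2 : (2 * (l + 1)).choose (l + 1) = (2 * l + 1).choose l + (2 * l + 1).choose l := by
    rw [show 2 * (l + 1) = 2 * l + 1 + 1 by ring, Nat.choose_succ_succ]
    congr 1
    rw [← Nat.choose_symm (by omega)]; congr 1; omega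
  rw [h2]; push_cast; ring

lemma aux_D_eq [Fact p.Prime] (hp : p.Prime) (m : ℕ) (hm : 0 < m) (hpm : p = 4 * m + 1) :
    ((∑ k ∈ range (2 * m + 1), (2 * m).choose k * (2 * m + k).choose k : ℕ) : ZMod (p ^ 2)) =
    - ∑ x : ZMod p, teich p x ^ (3 * m) * (teich p (1 - x)) ^ (2 * m) := by
  have hps := aux_psq (p := p)
  have hpc : (p : ZMod (p ^ 2)) = 4 * m + 1 := by
    exact_mod_cast congrArg (Nat.cast : ℕ → ZMod (p ^ 2)) hpm
  rw [aux_F hp m hm hpm]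
  have hD := congrArg (Int.cast : ℤ → ZMod (p ^ 2)) (aux_series_D (2 * m) m rfl)
  rw [Int.cast_natCast] at hD
  rw [hD, ← Finset.sum_range_reflect, Finset.sum_range_succ']
  have hH := congrArg (Int.cast : ℤ → ZMod (p ^ 2)) (aux_half m hm)
  push_cast at hH ⊢
  rw [Finset.mul_sum] at hH
  have t0 : (-1 : ZMod (p ^ 2)) ^ (m - 0) * ((2 * m).choose (m - 0) : ZMod (p ^ 2)) *
      ((2 * (2 * m) + 2 * (m - (m - 0))).choose (2 * (2 * m)) : ZMod (p ^ 2)) =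
      (-1) ^ m * ((2 * m).choose m : ZMod (p ^ 2)) := by simp
  rw [t0]
  have ts : ∀ s ∈ range m, (-1 : ZMod (p ^ 2)) ^ (m - (s + 1)) *
      ((2 * m).choose (m - (s + 1)) : ZMod (p ^ 2)) *
      ((2 * (2 * m) + 2 * (m - (m - (s + 1)))).choose (2 * (2 * m)) : ZMod (p ^ 2)) =
      p * ((s : ZMod (p ^ 2)) + 1)⁻¹ *
        ((-1) ^ (m + s + 1) * ((2 * m - 1).choose (m - 1 - s) : ZMod (p ^ 2))) +
      p * (2 * ((-1) ^ (m + s + 1) * ((2 * m).choose (m - 1 - s) : ZMod (p ^ 2)))) := by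
    intro s hs
    simp at hs
    have h1 := aux_choose_p hp (2 * (s + 1)) (by omega) (by omega)
    rw [show p - 1 = 2 * (2 * m) by omega] at h1
    rw [show m - (m - (s + 1)) = s + 1 by omega, h1,
      show m - (s + 1) = m - 1 - s by omega]
    have hneg : ((-1 : ZMod (p ^ 2))) ^ (m + s + 1) = (-1) ^ (m - 1 - s) := by
      rw [show m + s + 1 = (m - 1 - s) + 2 * (s + 1) by omega, pow_add (-1 : ZMod (p ^ 2)),
        pow_mul (-1 : ZMod (p ^ 2))]; simp
    rw [hneg]
    have u1 := aux_unit hp (k := s + 1) (by omega) (by omega)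
    have u2 := aux_unit hp (k := 2 * (s + 1)) (by omega) (by omega)
    have hc : (2 * m) * (2 * m - 1).choose (m - 1 - s) = (2 * m).choose (m - 1 - s) * (m + s + 1) := by
      have := Nat.choose_mul_succ_eq (2 * m - 1) (m - 1 - s)
      rw [show 2 * m - 1 + 1 = 2 * m by omega, show 2 * m - (m - 1 - s) = m + s + 1 by omega] at this
      rw [← this]; ring
    have hc' := congrArg (Nat.cast : ℕ → ZMod (p ^ 2)) hc
    push_cast at hc' u1 u2 ⊢
    generalize ((s : ZMod (p ^ 2)) + 1)⁻¹ = A' at *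
    generalize (2 * ((s : ZMod (p ^ 2)) + 1))⁻¹ = B' at *
    generalize (-1 : ZMod (p ^ 2)) ^ (m - 1 - s) = S at *
    generalize ((2 * m - 1).choose (m - 1 - s) : ZMod (p ^ 2)) = C1 at *
    generalize ((2 * m).choose (m - 1 - s) : ZMod (p ^ 2)) = C at *
    have k1 : p * C1 = -2 * p * C * (m + s + 1) := by
      linear_combination (-2 * p) * hc' + p * C1 * hpc * (-1) + C1 * hps
    have k2 : A' = 2 * B' := by linear_combination 2 * B' * u1 - A' * u2
    rw [k2] at u1 ⊢
    have k3 : p * C * B' = -4 * p * C * B' * m := by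
      linear_combination p * C * B' * (-1) * hpc + C * B' * hps
    linear_combination S * k3 - 2 * B' * S * k1 + 2 * S * p * C * u1
  rw [Finset.sum_congr rfl ts, Finset.sum_add_distrib, ← Finset.mul_sum, hH]
  ring

end teich

section jacobi
variable {p : ℕ}

/-- The unit `i` of the Gaussian integers. -/
def gaussI : GaussianIntˣ := ⟨⟨0, 1⟩, ⟨0, -1⟩, by ext <;> simp, by ext <;> simp⟩

lemma gaussI_sq : (gaussI : GaussianInt) ^ 2 = -1 := by
  rw [sq]; ext <;> simp [gaussI]

lemma aux_jacobi [Fact p.Prime] (hp : p.Prime) (m : ℕ) (hm : 0 < m) (hpm : p = 4 * m + 1) :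
    ∃ (a b c d : ℤ) (ι : ZMod (p ^ 2)), ι * ι = -1 ∧ a ^ 2 + b ^ 2 = p ∧
      a + p = 2 * (c + d) ∧ b = 2 * (d - c) ∧
      ∑ x : ZMod p, teich p x ^ (3 * m) * (teich p (1 - x)) ^ (2 * m) = (a : ZMod (p ^ 2)) + (b : ZMod (p ^ 2)) * ι := by
  have hodd : Odd p := ⟨2 * m, by omega⟩
  have hp1 : p - 1 = 4 * m := by omega
  obtain ⟨g, hg⟩ := IsCyclic.exists_generator (α := (ZMod p)ˣ)
  have hord : orderOf g = 4 * m := by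
    rw [orderOf_eq_card_of_forall_mem_zpowers hg, Nat.card_eq_fintype_card, ZMod.card_units, hp1]
  have hgpow : ∀ x : ZMod p, x ≠ 0 → ∃ k : ℕ, x = (g : ZMod p) ^ k := by
    intro x hx
    have h := hg (Units.mk0 x hx)
    rw [← mem_powers_iff_mem_zpowers] at h
    obtain ⟨k, hk⟩ := h
    refine ⟨k, ?_⟩
    have := congrArg Units.val hk
    simpa using this.symm
  have hg4 : (g : ZMod p) ^ (4 * m) = 1 := by
    rw [← hp1]; exact ZMod.pow_card_sub_one_eq_one g.ne_zero
  have hg2 : (g : ZMod p) ^ (2 * m) = -1 := by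
    have h1 : ((g : ZMod p) ^ (2 * m)) ^ 2 = 1 := by rw [← pow_mul, ← hg4]; congr 1; ring
    rcases (sq_eq_sq_iff_eq_or_eq_neg.1 (h1.trans (one_pow 2).symm)) with h | h
    · exfalso
      have : g ^ (2 * m) = 1 := by ext; push_cast; exact h
      have := Nat.le_of_dvd (by omega) (orderOf_dvd_of_pow_eq_one this)
      omega
    · exact h
  have hI4 : (gaussI : GaussianIntˣ) ^ 4 = 1 := by
    ext1; push_cast
    rw [show 4 = 2 * 2 by norm_num, pow_mul, gaussI_sq]; norm_num
  have hζ : gaussI ∈ rootsOfUnity (Fintype.card (ZMod p)ˣ) GaussianInt := by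
    rw [mem_rootsOfUnity, ZMod.card_units, hp1, pow_mul, hI4, one_pow]
  let χ : MulChar (ZMod p) GaussianInt := MulChar.ofRootOfUnity hζ hg
  have hχg : χ g = gaussI := MulChar.ofRootOfUnity_spec hζ hg
  have hχk : ∀ k : ℕ, χ ((g : ZMod p) ^ k) = (gaussI : GaussianInt) ^ k := by
    intro k; rw [map_pow, hχg]
  have hχ2k : ∀ k : ℕ, (χ ^ 2) ((g : ZMod p) ^ k) = (-1 : GaussianInt) ^ k := by
    intro k
    rw [MulChar.pow_apply' _ two_ne_zero, hχk, ← pow_mul, mul_comm, pow_mul, gaussI_sq]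
  have hχne : χ ≠ 1 := by
    intro h
    have h1 := hχg
    rw [h, MulChar.one_apply_coe] at h1
    have := congrArg Zsqrtd.re h1
    simp [gaussI] at this
  have hχ2ne : χ ^ 2 ≠ 1 := by
    intro h
    have h1 := hχ2k 1
    rw [h, pow_one, MulChar.one_apply_coe] at h1
    have := congrArg Zsqrtd.re h1
    simp at this
  have hχ3ne : χ * χ ^ 2 ≠ 1 := by
    intro h
    have h1 : (χ * χ ^ 2) g = gaussI * (-1) := by
      rw [MulChar.mul_apply, hχg]
      have := hχ2k 1
      rw [pow_one, pow_one] at this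
      rw [this]
    rw [h, MulChar.one_apply_coe] at h1
    have := congrArg Zsqrtd.re h1
    simp [gaussI] at this
  set J := jacobiSum χ (χ ^ 2) with hJ
  have hnorm : J.re ^ 2 + J.im ^ 2 = (p : ℤ) := by
    have hinj : Function.Injective GaussianInt.toComplex := GaussianInt.toComplex_injective
    let ψ := χ.ringHomComp GaussianInt.toComplex
    let φ := (χ ^ 2).ringHomComp GaussianInt.toComplex
    have n1 : ψ ≠ 1 := (MulChar.ringHomComp_ne_one_iff hinj).2 hχne
    have n2 : φ ≠ 1 := (MulChar.ringHomComp_ne_one_iff hinj).2 hχ2ne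
    have n3 : ψ * φ ≠ 1 := by
      have : ψ * φ = (χ * χ ^ 2).ringHomComp GaussianInt.toComplex := by
        rw [MulChar.ringHomComp_mul]
      rw [this]
      exact (MulChar.ringHomComp_ne_one_iff hinj).2 hχ3ne
    have hch : ringChar ℂ ≠ ringChar (ZMod p) := by
      rw [ringChar.eq_zero, ZMod.ringChar_zmod_n]
      exact hp.ne_zero.symm
    have hm := jacobiSum_mul_jacobiSum_inv hch n1 n2 n3
    have hst : jacobiSum ψ⁻¹ φ⁻¹ = star (jacobiSum ψ φ) := by
      simp only [jacobiSum, star_sum, star_mul', MulChar.star_apply']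
    have hJc : jacobiSum ψ φ = GaussianInt.toComplex J := by
      rw [hJ, ← jacobiSum_ringHomComp]
    rw [hst, hJc, ZMod.card] at hm
    have h2 : (Complex.normSq (GaussianInt.toComplex J) : ℂ) = p := by
      rw [← hm, ← Complex.mul_conj]; rfl
    rw [Complex.normSq_apply] at h2
    have h3 : ((J.re : ℝ) * J.re + (J.im : ℝ) * J.im) = p := by
      have := h2
      simp only [← GaussianInt.intCast_re, ← GaussianInt.intCast_im] at this
      exact_mod_cast this
    have h4 : J.re * J.re + J.im * J.im = p := by exact_mod_cast h3
    rw [← h4]; ring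
  have hcong : (((gaussI : GaussianInt) - 1) * (-1 - 1)) ∣ J + p := by
    have hdiv : ∀ x : ZMod p, (((gaussI : GaussianInt) - 1) * (-1 - 1)) ∣
        (χ x - (1 : MulChar (ZMod p) GaussianInt) x) *
          ((χ ^ 2) (1 - x) - (1 : MulChar (ZMod p) GaussianInt) (1 - x)) := by
      intro x
      apply mul_dvd_mul
      · by_cases hx : x = 0
        · rw [hx, MulChar.map_zero, MulChar.map_zero, sub_zero]; exact dvd_zero _
        · obtain ⟨k, rfl⟩ := hgpow x hx
          rw [hχk, MulChar.one_apply (isUnit_iff_ne_zero.2 hx)]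
          simpa using sub_dvd_pow_sub_pow (gaussI : GaussianInt) 1 k
      · generalize 1 - x = y
        by_cases hx : y = 0
        · rw [hx, MulChar.map_zero, MulChar.map_zero, sub_zero]; exact dvd_zero _
        · obtain ⟨k, rfl⟩ := hgpow y hx
          rw [hχ2k, MulChar.one_apply (isUnit_iff_ne_zero.2 hx)]
          simpa using sub_dvd_pow_sub_pow (-1 : GaussianInt) 1 k
    have hs := Finset.dvd_sum (s := Finset.univ) (fun x _ => hdiv x)
    have h1 : jacobiSum χ 1 = -1 := by
      rw [jacobiSum_comm]; exact jacobiSum_one_nontrivial hχne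
    have h2 : jacobiSum 1 (χ ^ 2) = -1 := jacobiSum_one_nontrivial hχ2ne
    have h3 : jacobiSum (1 : MulChar (ZMod p) GaussianInt) 1 = p - 2 := by
      rw [jacobiSum_one_one, ZMod.card]
    have e : ∑ x : ZMod p, (χ x - (1 : MulChar (ZMod p) GaussianInt) x) *
          ((χ ^ 2) (1 - x) - (1 : MulChar (ZMod p) GaussianInt) (1 - x)) = J + p := by
      have : J + p = J - jacobiSum χ 1 - jacobiSum 1 (χ ^ 2) + jacobiSum (1 : MulChar (ZMod p) GaussianInt) 1 := by
        rw [h1, h2, h3]; ring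
      rw [this, hJ]
      simp only [jacobiSum]
      rw [← Finset.sum_sub_distrib, ← Finset.sum_sub_distrib, ← Finset.sum_add_distrib]
      refine Finset.sum_congr rfl fun x _ => ?_
      ring
    rwa [e] at hs
  obtain ⟨z, hz⟩ := hcong
  set ι := teich p (g : ZMod p) ^ (3 * m) with hι
  have hιsq : ι * ι = -1 := by
    have : ι * ι = teich p (((g : ZMod p) ^ (4 * m)) * (g : ZMod p) ^ (2 * m)) := by
      rw [teich_mul hp, teich_pow hp, teich_pow hp, hι]; ring
    rw [this, hg4, hg2, one_mul, teich_neg_one hp hodd]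
  let Φ : GaussianInt →+* ZMod (p ^ 2) := Zsqrtd.lift ⟨ι, by rw [hιsq]; simp⟩
  have hΦ : ∀ z : GaussianInt, Φ z = z.re + z.im * ι := fun z => rfl
  have hΦI : Φ gaussI = ι := by rw [hΦ]; simp [gaussI]
  have hΦχ : ∀ x : ZMod p, Φ (χ x) = teich p x ^ (3 * m) := by
    intro x
    by_cases hx : x = 0
    · rw [hx, MulChar.map_zero, map_zero, teich_zero hp, zero_pow (by omega)]
    · obtain ⟨k, rfl⟩ := hgpow x hx
      rw [hχk, map_pow, hΦI, hι, teich_pow hp]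
      ring
  have hΦχ2 : ∀ x : ZMod p, Φ ((χ ^ 2) x) = teich p x ^ (2 * m) := by
    intro x
    by_cases hx : x = 0
    · rw [hx, MulChar.map_zero, map_zero, teich_zero hp, zero_pow (by omega)]
    · obtain ⟨k, rfl⟩ := hgpow x hx
      have h2 : teich p (g : ZMod p) ^ (2 * m) = -1 := by
        rw [← teich_pow hp, hg2, teich_neg_one hp hodd]
      rw [hχ2k, map_pow, map_neg, map_one, teich_pow hp, ← pow_mul, mul_comm k, pow_mul, h2]
  refine ⟨J.re, J.im, z.re, z.im, ι, hιsq, hnorm, ?_, ?_, ?_⟩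
  · have := congrArg Zsqrtd.re hz
    simp [gaussI] at this
    linarith
  · have := congrArg Zsqrtd.im hz
    simp [gaussI] at this
    linarith
  · rw [← hΦ, hJ, jacobiSum, map_sum]
    refine Finset.sum_congr rfl fun x _ => ?_
    rw [map_mul, hΦχ, hΦχ2]

end jacobi

lemma aux_even_sum (f : ℕ → ℤ) (m : ℕ) :
    ∑ j ∈ range (2 * m + 1), (1 + (-1) ^ j) * f j = 2 * ∑ k ∈ range (m + 1), f (2 * k) := by
  induction m with
  | zero => simp
  | succ m ih =>
    rw [show 2 * (m + 1) + 1 = 2 * m + 1 + 1 + 1 by ring, Finset.sum_range_succ,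
      Finset.sum_range_succ, ih, Finset.sum_range_succ _ (m + 1),
      show 2 * m + 1 + 1 = 2 * (m + 1) by ring, pow_succ, pow_mul, pow_mul]
    simp
    ring

lemma aux_two_squares (p : ℕ) (hp : p.Prime) (a b c d : ℤ) (h1 : (p : ℤ) = a ^ 2 + b ^ 2)
    (h2 : (p : ℤ) = c ^ 2 + d ^ 2) (ha : a % 2 = 1) (hc : c % 2 = 1) (hd : d % 2 = 0) :
    a = c ∨ a = -c := by
  have hpp : Prime (p : ℤ) := Nat.prime_iff_prime_int.1 hp
  have hp0 : (0 : ℤ) < p := by exact_mod_cast hp.pos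
  have hk : (a * d - c * b) * (a * d + c * b) = p * (a ^ 2 - c ^ 2) := by
    linear_combination c ^ 2 * h1 - a ^ 2 * h2
  suffices h : a ^ 2 - c ^ 2 = 0 from sq_eq_sq_iff_eq_or_eq_neg.1 (by linarith)
  have hb : ∀ u : ℤ, (a * c + b * d * u) % 2 = 1 := by
    intro u
    obtain ⟨d', rfl⟩ : (2 : ℤ) ∣ d := Int.dvd_of_emod_eq_zero hd
    obtain ⟨a', ha'⟩ : ∃ a', a = 2 * a' + 1 := ⟨a / 2, by omega⟩
    obtain ⟨c', hc'⟩ : ∃ c', c = 2 * c' + 1 := ⟨c / 2, by omega⟩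
    have : a * c + b * (2 * d') * u = 2 * (2 * a' * c' + a' + c' + b * d' * u) + 1 := by
      rw [ha', hc']; ring
    rw [this]; omega
  have fin : ∀ u : ℤ, u ^ 2 = 1 → (p : ℤ) ∣ a * d - c * b * u → a * d - c * b * u = 0 := by
    intro u hu hdv
    obtain ⟨t, ht⟩ := hdv
    have hsum : (a * c + b * d * u) ^ 2 + (a * d - c * b * u) ^ 2 = (p : ℤ) ^ 2 := by
      rw [sq (p : ℤ)]; nth_rw 1 [h1]; rw [h2]
      linear_combination (b ^ 2 * d ^ 2 + c ^ 2 * b ^ 2) * hu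
    rw [ht] at hsum ⊢
    have hne : a * c + b * d * u ≠ 0 := by
      intro h0; have := hb u; rw [h0] at this; omega
    have hpos : 0 < (a * c + b * d * u) ^ 2 := by positivity
    have : t ^ 2 < 1 := by
      by_contra hh
      push Not at hh
      nlinarith [sq_nonneg (p : ℤ)]
    have ht0 : t = 0 := by
      by_contra hh
      have : 0 < t ^ 2 := by positivity
      omega
    rw [ht0, mul_zero]
  have hz : (a * d - c * b) * (a * d + c * b) = 0 := by
    rcases hpp.dvd_or_dvd (Dvd.intro _ hk.symm) with h | h
    · have := fin 1 (by norm_num) (by simpa using h)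
      rw [mul_one] at this
      rw [this, zero_mul]
    · have := fin (-1) (by norm_num) (by simpa using h)
      have h' : a * d + c * b = 0 := by linarith
      rw [h', mul_zero]
  rw [hz] at hk
  rcases mul_eq_zero.1 hk.symm with h | h
  · omega
  · exact h

lemma aux_final_a (p : ℕ) (hp : p.Prime) (m : ℕ) (hpm : p = 4 * m + 1) (a b a' b' c d : ℤ)
    (hab : (p : ℤ) = a ^ 2 + b ^ 2) (ha : a % 4 = 1) (hn : a' ^ 2 + b' ^ 2 = p)
    (h1 : a' + p = 2 * (c + d)) (h2 : b' = 2 * (d - c)) : a' = - ((-1) ^ m * a) := by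
  have hpc : (p : ℤ) = 4 * m + 1 := by exact_mod_cast hpm
  have ho : a' % 2 = 1 := by omega
  have hs := aux_two_squares p hp a b a' b' hab hn.symm (by omega) ho (by omega)
  have hq : (d - c - m) % 2 = 0 := by
    obtain ⟨r, hr⟩ : ∃ r, a' = 2 * r + 1 := ⟨a' / 2, by omega⟩
    have e : r * (r + 1) + (d - c) ^ 2 = m := by
      rw [hr, h2, hpc] at hn
      linarith
    have e1 := Int.even_mul_succ_self r
    have e2 : Even ((d - c) ^ 2 + (d - c)) := by
      have := Int.even_mul_succ_self (d - c)
      convert this using 1; ring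
    obtain ⟨x, hx⟩ := e1
    obtain ⟨y, hy⟩ := e2
    omega
  rcases Nat.even_or_odd m with hm | hm
  · rw [hm.neg_one_pow]
    obtain ⟨k, hk⟩ := hm
    omega
  · rw [hm.neg_one_pow]
    obtain ⟨k, hk⟩ := hm
    omega

lemma aux_main (p : ℕ) (hp : p.Prime) (m : ℕ) (hm : 0 < m) (hpm : p = 4 * m + 1) (a b : ℤ)
    (hab : (p : ℤ) = a ^ 2 + b ^ 2) (ha : a % 4 = 1) :
    2 * (a : ZMod (p ^ 2)) *
      ((∑ k ∈ range (2 * m + 1), (2 * m).choose k * (2 * m + k).choose k : ℕ) : ZMod (p ^ 2)) =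
      (-1) ^ m * (4 * (a : ZMod (p ^ 2)) ^ 2 - p) := by
  have := Fact.mk hp
  have hps := aux_psq (p := p)
  obtain ⟨a', b', c, d, ι, hι, hn, h1, h2, hF⟩ := aux_jacobi hp m hm hpm
  have ha' := aux_final_a p hp m hpm a b a' b' c d hab ha hn h1 h2
  rw [aux_D_eq hp m hm hpm]
  have hF2 := aux_F hp m hm hpm
  have hu : IsUnit ((a' : ZMod (p ^ 2)) + (b' : ZMod (p ^ 2)) * ι) := by
    apply isUnit_of_red hp
    rw [← hF, hF2, map_sub, map_sum]
    have hp0 : red p (p : ZMod (p ^ 2)) = 0 := by rw [map_natCast]; exact ZMod.natCast_self p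
    rw [Finset.sum_eq_zero]
    · rw [map_mul, map_mul, map_sub, hp0, map_pow, map_neg, map_one, map_natCast, sub_zero]
      refine mul_ne_zero (mul_ne_zero (by simp) (by simp)) ?_
      rw [Ne, ZMod.natCast_eq_zero_iff]
      intro hdv
      have h3 : p ∣ (2 * m).factorial := by
        have := Nat.choose_mul_factorial_mul_factorial (n := 2 * m) (k := m) (by omega)
        rw [← this, mul_assoc]
        exact Dvd.dvd.mul_right hdv _
      have := (hp.dvd_factorial).1 h3
      omega
    · intro s _
      rw [map_mul, map_mul, hp0, zero_mul, zero_mul]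
  rw [hF]
  have hnR : (a' : ZMod (p ^ 2)) ^ 2 + (b' : ZMod (p ^ 2)) ^ 2 = p := by
    exact_mod_cast congrArg (Int.cast : ℤ → ZMod (p ^ 2)) hn
  have haR : (a' : ZMod (p ^ 2)) = - ((-1) ^ m * (a : ZMod (p ^ 2))) := by
    have := congrArg (Int.cast : ℤ → ZMod (p ^ 2)) ha'
    push_cast at this
    exact this
  have hs : ((-1 : ZMod (p ^ 2)) ^ m) * (-1) ^ m = 1 := by rw [← mul_pow]; simp
  generalize (-1 : ZMod (p ^ 2)) ^ m = S at *
  generalize (a' : ZMod (p ^ 2)) = A' at *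
  generalize (b' : ZMod (p ^ 2)) = B' at *
  generalize (a : ZMod (p ^ 2)) = A at *
  have hprod : (A' + B' * ι) * (A' - B' * ι) = p := by
    linear_combination hnR - B' ^ 2 * hι
  have hz : (A' - B' * ι) ^ 2 = 0 := by
    have : (A' + B' * ι) ^ 2 * (A' - B' * ι) ^ 2 = 0 := by
      rw [← mul_pow, hprod]; exact (sq (p : ZMod (p ^ 2))).trans hps
    exact (hu.pow 2).mul_right_eq_zero.1 this
  have hA : A = - (S * A') := by rw [haR]; linear_combination (-A) * hs
  rw [hA]
  linear_combination (-S) * hz - S * hprod - 4 * S * A' ^ 2 * hs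

theorem stmt19 (p : ℕ) (hp : p.Prime) (hp4 : p % 4 = 1) (a b : ℤ)
    (hab : (p : ℤ) = a ^ 2 + b ^ 2) (ha : a % 4 = 1) :
    ratCongr p 2
      (∑ k ∈ Finset.range ((p - 1) / 4 + 1), ((4 * k).choose (2 * k) : ℚ) ^ 2 / 16 ^ (2 * k))
      (1 / 2 + (-1 : ℚ) ^ ((p - 1) / 4) * (a : ℚ) -
        (-1 : ℚ) ^ ((p - 1) / 4) * (p : ℚ) / (4 * (a : ℚ))) := by
  obtain ⟨m, hm⟩ : ∃ m, m = (p - 1) / 4 := ⟨_, rfl⟩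
  rw [← hm]
  have hpm : p = 4 * m + 1 := by omega
  have hm0 : 0 < m := by
    rcases Nat.eq_zero_or_pos m with h | h
    · rw [h] at hpm; exact absurd hp (by rw [hpm]; norm_num)
    · exact h
  have hmain := aux_main p hp m hm0 hpm a b hab ha
  set D : ℕ := ∑ k ∈ range (2 * m + 1), (2 * m).choose k * (2 * m + k).choose k with hD
  let f : ℕ → ℤ := fun j => ((2 * m).choose j : ℤ) * ((2 * m + j).choose j : ℤ)
  have hsum : 2 * ∑ k ∈ range (m + 1), f (2 * k) = 1 + (D : ℤ) := by
    rw [← aux_even_sum]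
    have h1 := aux_series_one (2 * m)
    have h2 : ∑ k ∈ range (2 * m + 1), (-1 : ℤ) ^ k * f k = 1 := by
      refine Eq.trans ?_ h1
      refine Finset.sum_congr rfl fun k hk => ?_
      simp at hk
      have : (-1 : ℤ) ^ (2 * m - k) = (-1) ^ k := by
        have e : (-1 : ℤ) ^ (2 * m - k) * (-1) ^ k = 1 := by
          rw [← pow_add, show 2 * m - k + k = 2 * m by omega, pow_mul]; simp
        have e' : (-1 : ℤ) ^ k * (-1) ^ k = 1 := by rw [← mul_pow]; simp
        linear_combination (-1) ^ k * e - (-1) ^ (2 * m - k) * e'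
      rw [this]
    have h3 : (D : ℤ) = ∑ k ∈ range (2 * m + 1), f k := by
      rw [hD]; push_cast; rfl
    rw [h3]
    refine Eq.trans ?_ (congrArg (· + ∑ k ∈ range (2 * m + 1), f k) h2)
    show _ = _ + _
    rw [← Finset.sum_add_distrib]
    refine Finset.sum_congr rfl fun k hk => ?_
    ring
  let A : ℤ := ∑ k ∈ range (m + 1), ((4 * k).choose (2 * k) : ℤ) ^ 2 * 256 ^ (m - k)
  have hA : (A : ZMod (p ^ 2)) = 256 ^ m * ((∑ k ∈ range (m + 1), f (2 * k) : ℤ) : ZMod (p ^ 2)) := by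
    simp only [A, f]
    push_cast
    rw [Finset.mul_sum]
    refine Finset.sum_congr rfl fun k hk => ?_
    simp at hk
    have := aux_central hp (2 * m) (by omega) (2 * k) (by omega)
    rw [pow_mul (-1 : ZMod (p ^ 2)), show 2 * (2 * k) = 4 * k by ring, pow_mul (16 : ZMod (p ^ 2))] at this
    norm_num at this
    rw [← this]
    have e : (256 : ZMod (p ^ 2)) ^ m = 256 ^ (m - k) * 256 ^ k := by
      rw [← pow_add (256 : ZMod (p ^ 2))]; congr 1; omega
    rw [e]; ring
  have hN : ((p ^ 2 : ℕ) : ℤ) ∣ 4 * a * A - 256 ^ m * (2 * a + (-1) ^ m * (4 * a ^ 2 - p)) := by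
    rw [← ZMod.intCast_zmod_eq_zero_iff_dvd]
    have hs := congrArg (Int.cast : ℤ → ZMod (p ^ 2)) hsum
    push_cast at hs hA ⊢
    rw [hA, ← hmain]
    linear_combination (2 * (a : ZMod (p ^ 2)) * 256 ^ m) * hs
  obtain ⟨t, ht⟩ := hN
  have ha0 : a ≠ 0 := by rintro rfl; simp at ha
  have haQ : (a : ℚ) ≠ 0 := by exact_mod_cast ha0
  refine ⟨(t : ℚ) / ((256 ^ m * 4 * a : ℤ) : ℚ), ?_, ?_⟩
  · have hS : (∑ k ∈ range (m + 1), ((4 * k).choose (2 * k) : ℚ) ^ 2 / 16 ^ (2 * k)) =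
        (A : ℚ) / 256 ^ m := by
      simp only [A]
      push_cast
      rw [Finset.sum_div]
      refine Finset.sum_congr rfl fun k hk => ?_
      simp at hk
      have e : (256 : ℚ) ^ m = 256 ^ (m - k) * 256 ^ k := by
        rw [← pow_add]; congr 1; omega
      rw [e, pow_mul]
      norm_num
      field_simp
    have htQ := congrArg (Int.cast : ℤ → ℚ) ht
    push_cast at htQ
    rw [hS]
    push_cast
    field_simp
    linear_combination 2 * htQ
  · intro hdv
    have h1 := Rat.den_dvd t (256 ^ m * 4 * a)
    rw [Rat.divInt_eq_div] at h1
    have h2 : (p : ℤ) ∣ 256 ^ m * 4 * a := (Int.natCast_dvd_natCast.2 hdv).trans h1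
    have hpp : Prime (p : ℤ) := Nat.prime_iff_prime_int.1 hp
    have hp2 : ∀ n : ℕ, ¬ (p : ℤ) ∣ 2 ^ n := by
      intro n h
      have := hpp.dvd_of_dvd_pow h
      have := Int.le_of_dvd (by norm_num) this
      omega
    rcases hpp.dvd_or_dvd h2 with h | h
    · apply hp2 (8 * m + 2)
      rw [pow_add, pow_mul]
      norm_num
      exact h
    · have hle := Int.le_of_dvd (abs_pos.2 ha0) ((dvd_abs _ _).2 h)
      have h5 : (5 : ℤ) ≤ p := by omega
      have : |a| ^ 2 ≤ p := by rw [sq_abs, hab]; nlinarith [sq_nonneg b]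
      nlinarith
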